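/- Let t ≥ 4 and n ∈ {2^t-2, 2^t-1, 2^t, 2^t+1}. Then w_3^{2^{t-1}-2} ∉ I_{n,4} and w_3^{2^{t-1}-1} ∈ I_{n,4}; that is, the image of w_3 in the quotient ring F_2[w_2,w_3,w_4]/I_{n,4} has height exactly 2^{t-1}-2. (This expresses that the height of the Stiefel–Whitney class w̃_3 in H^*(G̃_{n,4}; F_2) equals 2^{t-1}-2.) -/

import Mathlib

open MvPolynomial

/-- The polynomials `g_r = g_r^{(4)}` in `F_2[w_2,w_3,w_4]` (variables `X 0 = w_2`,
`X 1 = w_3`, `X 2 = w_4`): `g_0 = 1`, `g_r = 0` for `r < 0`, and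
`g_r = w_2·g_{r-2} + w_3·g_{r-3} + w_4·g_{r-4}` for `r ≥ 1`. -/
noncomputable def g4 : ℤ → MvPolynomial (Fin 3) (ZMod 2)
  | r =>
    if r ≤ 0 then (if r = 0 then 1 else 0)
    else X 0 * g4 (r - 2) + X 1 * g4 (r - 3) + X 2 * g4 (r - 4)
  termination_by r => r.toNat
  decreasing_by all_goals omega

/-- The ideal `I_{n,4} = (g_{n-3}, g_{n-2}, g_{n-1}, g_n)` of `F_2[w_2,w_3,w_4]`. -/
noncomputable def I4 (n : ℤ) : Ideal (MvPolynomial (Fin 3) (ZMod 2)) :=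
  Ideal.span {g4 (n - 3), g4 (n - 2), g4 (n - 1), g4 n}


local notation "RR" => MvPolynomial (Fin 3) (ZMod 2)

lemma two_RR : (2 : RR) = 0 := CharTwo.two_eq_zero

lemma g4_neg (r : ℤ) (h : r < 0) : g4 r = 0 := by
  rw [g4, if_pos h.le, if_neg h.ne]

lemma g4_zero : g4 0 = 1 := by
  rw [g4]; simp

lemma g4_rec (r : ℤ) (h : 0 < r) :
    g4 r = X 0 * g4 (r - 2) + X 1 * g4 (r - 3) + X 2 * g4 (r - 4) := by
  conv_lhs => rw [g4, if_neg (not_le.mpr h)]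

lemma g4_double (k : ℕ) : ∀ r : ℤ, r ≤ k →
    g4 (2 * r) = g4 r ^ 2 + X 0 * g4 (r - 1) ^ 2 + X 2 * g4 (r - 2) ^ 2 ∧
    g4 (2 * r + 1) = X 1 * g4 (r - 1) ^ 2 := by
  induction k with
  | zero =>
    intro r hr
    rcases lt_or_eq_of_le hr with h | h
    · have h' : r < 0 := by simpa using h
      rw [g4_neg (2 * r) (by omega), g4_neg (2 * r + 1) (by omega), g4_neg r h',
        g4_neg (r - 1) (by omega), g4_neg (r - 2) (by omega)]
      simp
    · have h' : r = 0 := by simpa using h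
      subst h'
      rw [g4_rec (2 * 0 + 1) (by norm_num)]
      norm_num [g4_neg, g4_zero]
  | succ k ih =>
    intro r hr
    by_cases hk : r ≤ k
    · exact ih r hk
    have hr' : r = k + 1 := by push_cast at hr; omega
    have i1 := ih (r - 1) (by omega)
    have i2 := ih (r - 2) (by omega)
    have e1 : r - 1 - 1 = r - 2 := by ring
    have e2 : r - 1 - 2 = r - 3 := by ring
    have e3 : r - 2 - 1 = r - 3 := by ring
    have e4 : r - 2 - 2 = r - 4 := by ring
    have e5 : 2 * (r - 1) = 2 * r - 2 := by ring
    have e6 : 2 * (r - 1) + 1 = 2 * r - 1 := by ring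
    have e7 : 2 * (r - 2) = 2 * r - 4 := by ring
    have e8 : 2 * (r - 2) + 1 = 2 * r - 3 := by ring
    rw [e6, e5, e1, e2] at i1
    rw [e8, e7, e3, e4] at i2
    obtain ⟨i1, i1'⟩ := i1
    obtain ⟨i2, i2'⟩ := i2
    have h0 := g4_rec r (by omega)
    have h1 := g4_rec (2 * r) (by omega)
    have h2 := g4_rec (2 * r + 1) (by omega)
    rw [show 2 * r + 1 - 2 = 2 * r - 1 by ring, show 2 * r + 1 - 3 = 2 * r - 2 by ring,
      show 2 * r + 1 - 4 = 2 * r - 3 by ring] at h2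
    constructor
    · rw [h1, h0, i1, i2, i2']
      linear_combination (X 0 * X 2 * g4 (r - 3) ^ 2 - X 0 * X 1 * g4 (r - 2) * g4 (r - 3)
        - X 0 * X 2 * g4 (r - 2) * g4 (r - 4) - X 1 * X 2 * g4 (r - 3) * g4 (r - 4)) * two_RR
    · rw [h2, i1, i1', i2']
      linear_combination (X 0 * X 1 * g4 (r - 2) ^ 2 + X 1 * X 2 * g4 (r - 3) ^ 2) * two_RR

lemma g4_even (r : ℤ) :
    g4 (2 * r) = g4 r ^ 2 + X 0 * g4 (r - 1) ^ 2 + X 2 * g4 (r - 2) ^ 2 :=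
  (g4_double r.toNat r (by omega)).1

lemma g4_odd (r : ℤ) : g4 (2 * r + 1) = X 1 * g4 (r - 1) ^ 2 :=
  (g4_double r.toNat r (by omega)).2

noncomputable def sa (i : ℕ) : RR := g4 (2 ^ (i + 2) - 1)
noncomputable def sb (i : ℕ) : RR := g4 (2 ^ (i + 2) - 2)
noncomputable def sc (i : ℕ) : RR := g4 (2 ^ (i + 2) - 4)

lemma g4_three (i : ℕ) : g4 (2 ^ (i + 2) - 3) = 0 := by
  induction i with
  | zero =>
    rw [g4_rec _ (by norm_num)]
    norm_num [g4_neg]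
  | succ i ih =>
    rw [show (2 : ℤ) ^ (i + 1 + 2) - 3 = 2 * (2 ^ (i + 2) - 2) + 1 by ring, g4_odd,
      show (2 : ℤ) ^ (i + 2) - 2 - 1 = 2 ^ (i + 2) - 3 by ring, ih]
    simp

lemma g4_one : g4 1 = 0 := by
  rw [g4_rec _ (by norm_num)]
  norm_num [g4_neg]

lemma g4_two : g4 2 = X 0 := by
  rw [g4_rec _ (by norm_num)]
  norm_num [g4_neg, g4_zero]

lemma g4_3 : g4 3 = X 1 := by
  rw [g4_rec _ (by norm_num)]
  norm_num [g4_neg, g4_zero, g4_one]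

lemma sa_zero : sa 0 = X 1 := by rw [sa, ← g4_3]; norm_num
lemma sb_zero : sb 0 = X 0 := by rw [sb, ← g4_two]; norm_num
lemma sc_zero : sc 0 = 1 := by rw [sc, ← g4_zero]; norm_num

lemma sa_succ (i : ℕ) : sa (i + 1) = X 1 * sb i ^ 2 := by
  rw [sa, sb, show (2 : ℤ) ^ (i + 1 + 2) - 1 = 2 * (2 ^ (i + 2) - 1) + 1 by ring, g4_odd,
      show (2 : ℤ) ^ (i + 2) - 1 - 1 = 2 ^ (i + 2) - 2 by ring]

lemma sb_succ (i : ℕ) : sb (i + 1) = sa i ^ 2 + X 0 * sb i ^ 2 := by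
  rw [sa, sb, sb, show (2 : ℤ) ^ (i + 1 + 2) - 2 = 2 * (2 ^ (i + 2) - 1) by ring, g4_even,
      show (2 : ℤ) ^ (i + 2) - 1 - 1 = 2 ^ (i + 2) - 2 by ring,
      show (2 : ℤ) ^ (i + 2) - 1 - 2 = 2 ^ (i + 2) - 3 by ring, g4_three]
  ring

lemma sc_succ (i : ℕ) : sc (i + 1) = sb i ^ 2 + X 2 * sc i ^ 2 := by
  rw [sc, sb, sc, show (2 : ℤ) ^ (i + 1 + 2) - 4 = 2 * (2 ^ (i + 2) - 2) by ring, g4_even,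
      show (2 : ℤ) ^ (i + 2) - 2 - 1 = 2 ^ (i + 2) - 3 by ring,
      show (2 : ℤ) ^ (i + 2) - 2 - 2 = 2 ^ (i + 2) - 4 by ring, g4_three]
  ring

lemma g4_five (i : ℕ) : g4 (2 ^ (i + 1 + 2) - 5) = X 1 * sc i ^ 2 := by
  rw [sc, show (2 : ℤ) ^ (i + 1 + 2) - 5 = 2 * (2 ^ (i + 2) - 3) + 1 by ring, g4_odd,
      show (2 : ℤ) ^ (i + 2) - 3 - 1 = 2 ^ (i + 2) - 4 by ring]

lemma sQ (i : ℕ) : sa i * sb (i + 1) + sb i * sa (i + 1) = X 1 ^ (2 ^ (i + 2) - 1) := by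
  induction i with
  | zero =>
    rw [sa_succ, sb_succ, sa_zero, sb_zero]
    norm_num
    linear_combination (X 0 ^ 3 * X 1) * two_RR
  | succ i ih =>
    have hp : (2 : ℕ) ^ (i + 1 + 2) - 1 = 2 * (2 ^ (i + 2) - 1) + 1 := by
      have : 1 ≤ 2 ^ (i + 2) := Nat.one_le_two_pow
      rw [show i + 1 + 2 = (i + 2) + 1 by ring, pow_succ 2 (i + 2)]; omega
    rw [hp, pow_succ, mul_comm 2, pow_mul, ← ih, sa_succ (i + 1), sb_succ (i + 1), sa_succ,
      sb_succ]
    generalize sa i = a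
    generalize sb i = b
    linear_combination (X 1 * (2 * (a ^ 4 * b ^ 2 * X 0 + a ^ 2 * b ^ 4 * X 0 ^ 2) + b ^ 6 * X 0 ^ 3
      - X 0 * a ^ 4 * b ^ 2 - X 1 * a ^ 3 * b ^ 3 - X 0 * X 1 * a * b ^ 5)) * two_RR

noncomputable def ev3 : RR →ₐ[ZMod 2] RR := aeval ![X 0, 0, X 2]
noncomputable def ev23 : RR →ₐ[ZMod 2] RR := aeval ![0, 0, X 2]

lemma ev23_ev3 (p : RR) : ev23 (ev3 p) = ev23 p := by
  have : ev23.comp ev3 = ev23 := by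
    apply MvPolynomial.algHom_ext
    intro i
    fin_cases i <;> simp [ev23, ev3]
  exact DFunLike.congr_fun this p

lemma ev3_dvd (p : RR) : (X 1 : RR) ∣ p - ev3 p := by
  induction p using MvPolynomial.induction_on with
  | C a => simp [ev3, MvPolynomial.algebraMap_eq]
  | add p q hp hq =>
    rw [map_add, show p + q - (ev3 p + ev3 q) = (p - ev3 p) + (q - ev3 q) by ring]
    exact dvd_add hp hq
  | mul_X p i hp =>
    rw [map_mul, show p * X i - ev3 p * ev3 (X i)
      = (p - ev3 p) * X i + ev3 p * (X i - ev3 (X i)) by ring]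
    refine dvd_add (Dvd.dvd.mul_right hp _) (Dvd.dvd.mul_left ?_ _)
    fin_cases i <;> simp [ev3]

lemma ev3_s (i : ℕ) : ev3 (sa i) = 0 ∧ ∃ m, ev3 (sb i) = X 0 ^ m := by
  induction i with
  | zero =>
    rw [sa_zero, sb_zero]
    exact ⟨by simp [ev3], 1, by simp [ev3]⟩
  | succ i ih =>
    obtain ⟨h, m, hm⟩ := ih
    rw [sa_succ, sb_succ]
    refine ⟨by simp [ev3], m * 2 + 1, ?_⟩
    rw [map_add, map_mul, map_pow, map_pow, h, hm]
    simp [ev3]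
    ring

lemma ev23_s (i : ℕ) : ev23 (sa i) = 0 ∧ ev23 (sb i) = 0 ∧ ev23 (sc i) ≠ 0 := by
  induction i with
  | zero =>
    rw [sa_zero, sb_zero, sc_zero]
    exact ⟨by simp [ev23], by simp [ev23], by simp [ev23]⟩
  | succ i ih =>
    obtain ⟨h, h', h''⟩ := ih
    rw [sa_succ, sb_succ, sc_succ]
    refine ⟨by simp [ev23], ?_, ?_⟩
    · simp [h, h']
    · rw [map_add, map_mul, map_pow, map_pow, h']
      have : ev23 (X 2) = X 2 := by simp [ev23]
      rw [this]
      simp [h'']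

lemma syz (i : ℕ) (β γ : RR) (h : (X 1 : RR) ∣ sc i * β + sb i * γ) :
    ∃ β' γ', sc i * β + sb i * γ = X 1 * (sc i * β' + sb i * γ') := by
  obtain ⟨-, m, hm⟩ := ev3_s i
  obtain ⟨u, hu⟩ := h
  have h0 : ev3 (sc i) * ev3 β + X 0 ^ m * ev3 γ = 0 := by
    rw [← hm, ← map_mul, ← map_mul, ← map_add, hu]
    simp [ev3]
  have hnd : ¬ (X 0 : RR) ∣ ev3 (sc i) := by
    rintro ⟨v, hv⟩
    apply (ev23_s i).2.2
    rw [← ev23_ev3, hv]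
    simp [ev23]
  have hd : (X 0 : RR) ^ m ∣ ev3 (sc i) * ev3 β := ⟨- ev3 γ, by linear_combination h0⟩
  obtain ⟨δ, hδ⟩ := (MvPolynomial.X_prime (R := ZMod 2)).pow_dvd_of_dvd_mul_left m hnd hd
  have hγ : ev3 γ = - (ev3 (sc i) * δ) := by
    have hne : (X 0 : RR) ^ m ≠ 0 := pow_ne_zero _ (MvPolynomial.X_ne_zero _)
    apply mul_left_cancel₀ hne
    rw [hδ] at h0
    linear_combination h0
  obtain ⟨p, hp⟩ := ev3_dvd β
  obtain ⟨q, hq⟩ := ev3_dvd γ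
  obtain ⟨r, hr⟩ := ev3_dvd (sb i)
  obtain ⟨s, hs⟩ := ev3_dvd (sc i)
  rw [hm] at hr
  refine ⟨p - r * δ, q + s * δ, ?_⟩
  linear_combination sc i * hp + sb i * hq + sc i * hδ + sb i * hγ - sc i * δ * hr + sb i * δ * hs

noncomputable def dbl (m : Fin 3 →₀ ℕ) : Fin 3 →₀ ℕ := 2 • m + Finsupp.single 1 1

lemma dbl_inj : Function.Injective dbl := by
  intro m n h
  ext j
  have := DFunLike.congr_fun h j
  simp [dbl] at this
  exact this

lemma exists_D : ∃ D : RR →+ RR, ∀ p m, coeff m (D p) = coeff (dbl m) p := by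
  refine ⟨⟨⟨fun p => AddMonoidAlgebra.ofCoeff
    (Finsupp.comapDomain dbl (AddMonoidAlgebra.coeff p) dbl_inj.injOn), ?_⟩, ?_⟩, ?_⟩
  · ext m
    rfl
  · intro p q
    ext m
    rfl
  · intro p m
    rfl

theorem root_mem (u a b c α β γ : RR) (h : X 1 * u ^ 2 = a ^ 2 * α + b ^ 2 * β + c ^ 2 * γ) :
    u ∈ Ideal.span {a, b, c} := by
  obtain ⟨D, hD⟩ := exists_D
  have key : ∀ f g : RR, D (f ^ 2 * g) = f * D g := by
    intro f g
    induction f using MvPolynomial.induction_on' with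
    | monomial s r =>
      ext m
      rw [hD, MvPolynomial.monomial_pow, MvPolynomial.coeff_monomial_mul',
        MvPolynomial.coeff_monomial_mul', hD]
      have hr : r ^ 2 = r := ZMod.pow_card r
      have hle : 2 • s ≤ dbl m ↔ s ≤ m := by
        simp only [Finsupp.le_def, dbl]
        refine forall_congr' fun j => ?_
        have : (Finsupp.single (1 : Fin 3) 1 : Fin 3 →₀ ℕ) j ≤ 1 := by
          rw [Finsupp.single_apply]; split_ifs <;> simp
        simp only [Finsupp.add_apply, Finsupp.smul_apply, smul_eq_mul]
        omega
      by_cases hs : s ≤ m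
      · rw [if_pos hs, if_pos (hle.2 hs), hr]
        congr 2
        ext j
        have := hs j
        simp only [dbl, Finsupp.add_apply, Finsupp.smul_apply, smul_eq_mul, Finsupp.tsub_apply]
        omega
      · rw [if_neg hs, if_neg (fun h => hs (hle.1 h))]
    | add p q hp hq =>
      rw [CharTwo.add_sq, add_mul, map_add, hp, hq, add_mul]
  have hX : D (X 1) = 1 := by
    ext m
    rw [hD, MvPolynomial.coeff_X, MvPolynomial.coeff_one]
    congr 1
    rw [eq_iff_iff]
    have : Finsupp.single (1 : Fin 3) 1 = dbl 0 := by simp [dbl]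
    rw [this, dbl_inj.eq_iff]
  have h1 := congrArg D h
  rw [mul_comm, key, hX, map_add, map_add, key, key, key, mul_one] at h1
  rw [h1]
  refine Ideal.add_mem _ (Ideal.add_mem _ ?_ ?_) ?_ <;>
    exact Ideal.mul_mem_right _ _ (Ideal.subset_span (by simp))

lemma I4_anti (n : ℤ) (h : 0 ≤ n) : I4 (n + 1) ≤ I4 n := by
  unfold I4
  have m1 : g4 (n - 3) ∈ Ideal.span {g4 (n - 3), g4 (n - 2), g4 (n - 1), g4 n} :=
    Ideal.subset_span (by simp)
  have m2 : g4 (n - 2) ∈ Ideal.span {g4 (n - 3), g4 (n - 2), g4 (n - 1), g4 n} :=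
    Ideal.subset_span (by simp)
  have m3 : g4 (n - 1) ∈ Ideal.span {g4 (n - 3), g4 (n - 2), g4 (n - 1), g4 n} :=
    Ideal.subset_span (by simp)
  have m4 : g4 n ∈ Ideal.span {g4 (n - 3), g4 (n - 2), g4 (n - 1), g4 n} :=
    Ideal.subset_span (by simp)
  have e := g4_rec (n + 1) (by omega)
  rw [show n + 1 - 2 = n - 1 by ring, show n + 1 - 3 = n - 2 by ring,
    show n + 1 - 4 = n - 3 by ring] at e
  rw [Ideal.span_le]
  rw [show n + 1 - 2 = n - 1 by ring, show n + 1 - 3 = n - 2 by ring,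
    show n + 1 - 1 = n by ring]
  rintro x (rfl | rfl | rfl | rfl)
  · exact m2
  · exact m3
  · exact m4
  · rw [e]
    exact Ideal.add_mem _ (Ideal.add_mem _ (Ideal.mul_mem_left _ _ m3)
      (Ideal.mul_mem_left _ _ m2)) (Ideal.mul_mem_left _ _ m1)

lemma step (i : ℕ) (h : (X 1 : RR) ^ (2 ^ (i + 1) - 2) ∉ Ideal.span {sa i, sb i, sc i})  :
    (X 1 : RR) ^ (2 ^ (i + 2) - 2) ∉ I4 (2 ^ (i + 3) - 2) := by
  intro hm
  apply h
  have hle : I4 (2 ^ (i + 3) - 2) ≤ Ideal.span {X 1 * sc i ^ 2, sc (i + 1), sb (i + 1)} := by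
    unfold I4
    rw [Ideal.span_le]
    rw [show (2 : ℤ) ^ (i + 3) - 2 - 3 = 2 ^ (i + 1 + 2) - 5 by ring, g4_five,
      show (2 : ℤ) ^ (i + 3) - 2 - 2 = 2 ^ (i + 1 + 2) - 4 by ring,
      show (2 : ℤ) ^ (i + 3) - 2 - 1 = 2 ^ (i + 1 + 2) - 3 by ring, g4_three]
    rintro x (rfl | rfl | rfl | rfl)
    · exact Ideal.subset_span (by simp)
    · exact Ideal.subset_span (by simp [sc])
    · exact Ideal.zero_mem _
    · exact Ideal.subset_span (by simp [sb])
  have hm' := hle hm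
  rw [Ideal.mem_span_insert] at hm'
  obtain ⟨α, z, hz, hm'⟩ := hm'
  rw [Ideal.mem_span_pair] at hz
  obtain ⟨β, γ, rfl⟩ := hz
  have h1 : 1 ≤ 2 ^ i := Nat.one_le_two_pow
  by_cases hi : i = 0
  · subst hi
    rw [sc_zero]
    have h3 : (1 : RR) ∈ Ideal.span {sa 0, sb 0, 1} := Ideal.subset_span (by simp)
    simpa using h3
  have h2 : 2 ≤ 2 ^ i := by
    calc 2 = 2 ^ 1 := rfl
      _ ≤ 2 ^ i := Nat.pow_le_pow_right (by norm_num) (by omega)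
  have hp : 2 ^ (i + 2) - 2 = ((2 ^ (i + 1) - 2) * 2 + 1) + 1 := by
    rw [pow_succ 2 (i + 1), pow_succ 2 i]; omega
  rw [hp, pow_succ, pow_succ, pow_mul] at hm'
  generalize (X 1 : RR) ^ (2 ^ (i + 1) - 2) = u at *
  obtain ⟨β', γ', hs⟩ := syz (i + 1) β γ ⟨u ^ 2 * X 1 - α * sc i ^ 2, by linear_combination - hm'⟩
  have hc : X 1 * u ^ 2 = α * sc i ^ 2 + (sc (i + 1) * β' + sb (i + 1) * γ') := by
    apply mul_left_cancel₀ (MvPolynomial.X_ne_zero (R := ZMod 2) (1 : Fin 3))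
    linear_combination hm' + hs
  rw [sb_succ, sc_succ] at hc
  apply root_mem u (sa i) (sb i) (sc i) γ' (β' + X 0 * γ') (α + X 2 * β')
  linear_combination hc

lemma base : (X 1 : RR) ^ 2 ∉ Ideal.span {sa 1, sb 1, sc 1} := by
  intro h
  let φ : RR →ₐ[ZMod 2] Polynomial (ZMod 2) :=
    aeval ![Polynomial.X ^ 2, Polynomial.X ^ 3, Polynomial.X ^ 4]
  have h0 : φ (X 0) = Polynomial.X ^ 2 := by simp [φ]
  have h1 : φ (X 1) = Polynomial.X ^ 3 := by simp [φ]
  have h2 : φ (X 2) = Polynomial.X ^ 4 := by simp [φ]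
  have two : (2 : Polynomial (ZMod 2)) = 0 := CharTwo.two_eq_zero
  have hle : Ideal.span {sa 1, sb 1, sc 1} ≤
      (Ideal.span {(Polynomial.X : Polynomial (ZMod 2)) ^ 7}).comap φ := by
    rw [Ideal.span_le, sa_succ, sb_succ, sc_succ, sa_zero, sb_zero, sc_zero]
    rintro x (rfl | rfl | rfl) <;>
      simp only [SetLike.mem_coe, Ideal.mem_comap, Ideal.mem_span_singleton, map_add, map_mul,
        map_pow, h0, h1, h2, map_one]
    · exact ⟨1, by ring⟩
    · exact ⟨0, by linear_combination Polynomial.X ^ 6 * two⟩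
    · exact ⟨0, by linear_combination Polynomial.X ^ 4 * two⟩
  have h3 := hle h
  rw [Ideal.mem_comap, Ideal.mem_span_singleton, map_pow, h1, ← pow_mul,
    pow_dvd_pow_iff Polynomial.X_ne_zero Polynomial.not_isUnit_X] at h3
  omega

lemma main_not (i : ℕ) :
    (X 1 : RR) ^ (2 ^ (i + 2) - 2) ∉ Ideal.span {sa (i + 1), sb (i + 1), sc (i + 1)} := by
  induction i with
  | zero => simpa using base
  | succ i ih =>
    intro h
    have h1 : (1 : ℤ) ≤ 2 ^ (i + 4) := one_le_pow₀ (by norm_num)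
    have h2 : (2 : ℤ) ^ (i + 4) = 2 * 2 ^ (i + 3) := by ring
    apply step (i + 1) ih
    refine I4_anti (2 ^ (i + 4) - 2) (by omega) ?_
    refine Ideal.span_mono ?_ h
    rintro x (rfl | rfl | rfl)
    · right; right; right; rw [sa]; congr 1; ring
    · right; right; left; rw [sb]; congr 1; ring
    · left; rw [sc]; congr 1; ring

lemma main_mem (i : ℕ) : (X 1 : RR) ^ (2 ^ (i + 2) - 1) ∈ I4 (2 ^ (i + 3) + 1) := by
  rw [← sQ]
  refine Ideal.add_mem _ (Ideal.mul_mem_left _ _ ?_) (Ideal.mul_mem_left _ _ ?_)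
  · refine Ideal.subset_span ?_
    left; rw [sb]; congr 1; ring
  · refine Ideal.subset_span ?_
    right; left; rw [sa]; congr 1; ring

/-- Theorem 3.1(2): for `t ≥ 4` and `n ∈ {2^t-2, 2^t-1, 2^t, 2^t+1}`, the image of `w_3`
in `F_2[w_2,w_3,w_4]/I_{n,4}` has height exactly `2^{t-1} - 2`, i.e.
`w_3^{2^{t-1}-2} ∉ I_{n,4}` and `w_3^{2^{t-1}-1} ∈ I_{n,4}`. -/
theorem stmt6 (t : ℕ) (ht : 4 ≤ t) (n : ℤ)
    (hn : n = 2 ^ t - 2 ∨ n = 2 ^ t - 1 ∨ n = 2 ^ t ∨ n = 2 ^ t + 1) :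
    (X 1 : MvPolynomial (Fin 3) (ZMod 2)) ^ (2 ^ (t - 1) - 2) ∉ I4 n ∧
      (X 1 : MvPolynomial (Fin 3) (ZMod 2)) ^ (2 ^ (t - 1) - 1) ∈ I4 n := by
  obtain ⟨i, rfl⟩ : ∃ i, t = i + 4 := ⟨t - 4, by omega⟩
  have hpos : (16 : ℤ) ≤ 2 ^ (i + 4) := by
    rw [pow_add]
    have : (1 : ℤ) ≤ 2 ^ i := one_le_pow₀ (by norm_num)
    omega
  have hn1 := step (i + 1) (main_not i)
  have hm1 := main_mem (i + 1)
  have e1 : i + 4 - 1 = i + 1 + 2 := by omega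
  have e2 : i + 1 + 3 = i + 4 := by omega
  rw [e2] at hn1 hm1
  rw [e1]
  have a1 := I4_anti (2 ^ (i + 4) - 2) (by omega)
  have a2 := I4_anti (2 ^ (i + 4) - 1) (by omega)
  have a3 := I4_anti (2 ^ (i + 4)) (by omega)
  rw [show (2 : ℤ) ^ (i + 4) - 2 + 1 = 2 ^ (i + 4) - 1 by ring] at a1
  rw [show (2 : ℤ) ^ (i + 4) - 1 + 1 = 2 ^ (i + 4) by ring] at a2
  rcases hn with rfl | rfl | rfl | rfl
  · exact ⟨hn1, a1 (a2 (a3 hm1))⟩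
  · exact ⟨fun h => hn1 (a1 h), a2 (a3 hm1)⟩
  · exact ⟨fun h => hn1 (a1 (a2 h)), a3 hm1⟩
  · exact ⟨fun h => hn1 (a1 (a2 (a3 h))), hm1⟩
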